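/- Let g : S → ℝ satisfy ∑_{i∈S} |g(i)| < ∞. Then almost surely lim_{n→∞} (1/n) ∑_{k=1}^n g(X_k) = ∑_{j∈C} (g(j)/m_j) · 1_{A^j}, where A^j = {∃ l ≥ 1 : X_l = j} and C is the set of positive recurrent states. -/

import Mathlib

open MeasureTheory Filter Topology
open scoped ENNReal NNReal

variable {S : Type*} [Countable S] [DecidableEq S]

/-- k-step transition probabilities of a transition matrix `P`. -/
noncomputable def kstep (P : S → S → ℝ) : ℕ → S → S → ℝ
  | 0 => fun i j => if i = j then 1 else 0
  | (k+1) => fun i j => ∑' l, kstep P k i l * P l j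

/-- first passage probabilities `f^{(n)}_{ij}` (first visit to `j` at time exactly `n`). -/
noncomputable def fpass (P : S → S → ℝ) (j : S) : ℕ → S → ℝ
  | 0 => fun _ => 0
  | 1 => fun i => P i j
  | (n+2) => fun i => ∑' l, if l = j then 0 else P i l * fpass P j (n+1) l

/-- probability `f_{ij}` of ever reaching `j` from `i`. -/
noncomputable def hitProb (P : S → S → ℝ) (i j : S) : ℝ := ∑' n, fpass P j n i

/-- mean return time `m_j` to `j` (in `ℝ≥0∞`). -/
noncomputable def meanReturn (P : S → S → ℝ) (j : S) : ℝ≥0∞ :=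
  ∑' n : ℕ, (n : ℝ≥0∞) * ENNReal.ofReal (fpass P j n j)

def PositiveRecurrent (P : S → S → ℝ) (j : S) : Prop :=
  hitProb P j j = 1 ∧ meanReturn P j < ⊤

def NullRecurrent (P : S → S → ℝ) (j : S) : Prop :=
  hitProb P j j = 1 ∧ meanReturn P j = ⊤

def Transient (P : S → S → ℝ) (j : S) : Prop := hitProb P j j < 1

/-- `X` is a time-homogeneous Markov chain on `(Ω, μ)` with transition matrix `P`. -/
structure IsMarkovChain {Ω : Type*} [MeasurableSpace Ω] [MeasurableSpace S] (μ : Measure Ω)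
    (X : ℕ → Ω → S) (P : S → S → ℝ) : Prop where
  isProb : IsProbabilityMeasure μ
  meas : ∀ n, Measurable (X n)
  nonneg : ∀ i j, 0 ≤ P i j
  rowSum : ∀ i, ∑' j, P i j = 1
  markov : ∀ n (j : S) (f : ℕ → S),
    μ ({ω | X (n+1) ω = j} ∩ {ω | ∀ m ≤ n, X m ω = f m})
      = ENNReal.ofReal (P (f n) j) * μ {ω | ∀ m ≤ n, X m ω = f m}

/-- `M_j(n)`: number of visits to `j` at times `1,…,n`. -/
noncomputable def visits {Ω : Type*} (X : ℕ → Ω → S) (j : S) (n : ℕ) (ω : Ω) : ℝ :=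
  ∑ k ∈ Finset.Icc 1 n, if X k ω = j then (1:ℝ) else 0

/-!
By the strong Markov property, conditionally on the event that a recurrent state `j` is visited,
the times elapsed between consecutive visits to `j` are independent with law
`n ↦ fpass P j n j`. The strong law of large numbers, which for nonnegative variables needs no
integrability, makes their averages converge to `m_j ∈ (0, ∞]`; inverting, the proportion of time
spent at `j` converges to `1 / m_j`. A transient state is visited finitely often and a null
recurrent one has `1 / m_j = 0`, so only positive recurrent states contribute. Writing the average
of `g` as the sum over `j` of `g j` times the proportion of time spent at `j`, dominated
convergence with bound `|g|` gives the limit.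

The `σ`-algebra of the state space is arbitrary, so the events `{X n = j}` need not be measurable.
On the trace of the probability on `{X 0 = a}`, however, the Markov property makes the masses of the
extensions of a cylinder add up exactly, hence every cylinder is Carathéodory measurable; after
normalization the trace is the law of a chain on the discrete state space.
-/

open ProbabilityTheory

section StochasticMatrix

variable {E : Type*} {P : E → E → ℝ}

lemma summable_row (h1 : ∀ i, ∑' j, P i j = 1) (i : E) : Summable (P i) := by
  by_contra h
  exact zero_ne_one ((tsum_eq_zero_of_not_summable h).symm.trans (h1 i))

lemma tsum_ofReal_row (h0 : ∀ i j, 0 ≤ P i j) (h1 : ∀ i, ∑' j, P i j = 1) (i : E) :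
    ∑' j, ENNReal.ofReal (P i j) = 1 := by
  rw [← ENNReal.ofReal_tsum_of_nonneg (h0 i) (summable_row h1 i), h1, ENNReal.ofReal_one]

variable [DecidableEq E]

lemma ite_mul_mem_Icc {f : E → ℝ} (h0 : ∀ i j, 0 ≤ P i j) (hf : ∀ l, f l ∈ Set.Icc (0 : ℝ) 1)
    (i j l : E) : (if l = j then 0 else P i l * f l) ∈ Set.Icc 0 (P i l) := by
  split_ifs
  · exact ⟨le_rfl, h0 i l⟩
  · exact ⟨mul_nonneg (h0 i l) (hf l).1, mul_le_of_le_one_right (h0 i l) (hf l).2⟩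

lemma summable_ite_mul {f : E → ℝ} (h0 : ∀ i j, 0 ≤ P i j) (h1 : ∀ i, ∑' j, P i j = 1)
    (hf : ∀ l, f l ∈ Set.Icc (0 : ℝ) 1) (i j : E) :
    Summable fun l => if l = j then 0 else P i l * f l :=
  .of_nonneg_of_le (fun l => (ite_mul_mem_Icc h0 hf i j l).1)
    (fun l => (ite_mul_mem_Icc h0 hf i j l).2) (summable_row h1 i)

lemma fpass_mem_Icc (h0 : ∀ i j, 0 ≤ P i j) (h1 : ∀ i, ∑' j, P i j = 1) (j : E) :
    ∀ n i, fpass P j n i ∈ Set.Icc (0 : ℝ) 1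
  | 0, _ => ⟨le_rfl, zero_le_one⟩
  | 1, i => ⟨h0 i j, h1 i ▸ (summable_row h1 i).le_tsum j fun k _ => h0 i k⟩
  | n + 2, i => by
    have hf := fpass_mem_Icc h0 h1 j (n + 1)
    refine ⟨tsum_nonneg fun l => (ite_mul_mem_Icc h0 hf i j l).1, ?_⟩
    rw [← h1 i]
    exact (summable_ite_mul h0 h1 hf i j).tsum_le_tsum
      (fun l => (ite_mul_mem_Icc h0 hf i j l).2) (summable_row h1 i)

lemma ofReal_fpass_add_two (h0 : ∀ i j, 0 ≤ P i j) (h1 : ∀ i, ∑' j, P i j = 1) (j : E) (n : ℕ)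
    (i : E) :
    ENNReal.ofReal (fpass P j (n + 2) i) = ∑' l, if l = j then 0 else
      ENNReal.ofReal (P i l) * ENNReal.ofReal (fpass P j (n + 1) l) := by
  have hf := fpass_mem_Icc h0 h1 j (n + 1)
  rw [fpass, ENNReal.ofReal_tsum_of_nonneg (fun l => (ite_mul_mem_Icc h0 hf i j l).1)
    (summable_ite_mul h0 h1 hf i j)]
  refine tsum_congr fun l => ?_
  rw [apply_ite ENNReal.ofReal, ENNReal.ofReal_zero, ENNReal.ofReal_mul (h0 i l)]

lemma hitProb_eq_toReal (h0 : ∀ i j, 0 ≤ P i j) (h1 : ∀ i, ∑' j, P i j = 1) (i j : E) :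
    hitProb P i j = (∑' n, ENNReal.ofReal (fpass P j n i)).toReal := by
  rw [ENNReal.tsum_toReal_eq fun _ => ENNReal.ofReal_ne_top]
  exact tsum_congr fun n => (ENNReal.toReal_ofReal (fpass_mem_Icc h0 h1 j n i).1).symm

lemma hitProb_eq_one_iff (h0 : ∀ i j, 0 ≤ P i j) (h1 : ∀ i, ∑' j, P i j = 1) (i j : E) :
    hitProb P i j = 1 ↔ ∑' n, ENNReal.ofReal (fpass P j n i) = 1 := by
  rw [hitProb_eq_toReal h0 h1, ENNReal.toReal_eq_one_iff]

lemma tsum_fpass_le_meanReturn (P : E → E → ℝ) (j : E) :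
    ∑' n, ENNReal.ofReal (fpass P j n j) ≤ meanReturn P j := by
  refine ENNReal.tsum_le_tsum fun n => ?_
  rcases n.eq_zero_or_pos with rfl | hn
  · simp [fpass]
  · exact le_mul_of_one_le_left zero_le (by exact_mod_cast hn)

end StochasticMatrix

section NthCount

variable {p : ℕ → Prop}

-- `Nat.nth p k` is `0` when `p` holds fewer than `k + 1` times, so when `p 0` fails,
-- `0 < Nat.nth p k` says that the occurrence number `k` of `p`, counted from `0`, exists.
lemma lt_card_of_nth_pos {k : ℕ} (h : 0 < Nat.nth p k) (hf : (Set.ofPred p).Finite) :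
    k < hf.toFinset.card := by
  by_contra! hk
  exact h.ne' (Nat.nth_of_card_le hf hk)

lemma infinite_of_forall_nth_pos (h : ∀ k, 0 < Nat.nth p k) : (Set.ofPred p).Infinite :=
  fun hf => lt_irrefl _ (lt_card_of_nth_pos (h hf.toFinset.card) hf)

lemma nth_lt_nth_of_nth_pos {i k : ℕ} (hik : i < k) (h : 0 < Nat.nth p k) :
    Nat.nth p i < Nat.nth p k :=
  Nat.nth_lt_nth' hik (lt_card_of_nth_pos h)

lemma nth_pos_of_le (h0 : ¬ p 0) {i k : ℕ} (hik : i ≤ k) (h : 0 < Nat.nth p k) :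
    0 < Nat.nth p i := by
  refine Nat.pos_of_ne_zero fun hi => h0 (hi ▸ Nat.nth_mem i fun hf => ?_)
  exact hik.trans_lt (lt_card_of_nth_pos h hf)

variable [DecidablePred p]

lemma nth_eq_iff {k t : ℕ} (ht : 0 < t) : Nat.nth p k = t ↔ p t ∧ Nat.count p t = k := by
  constructor
  · rintro rfl
    exact ⟨Nat.nth_mem k (lt_card_of_nth_pos ht), Nat.count_nth (lt_card_of_nth_pos ht)⟩
  · rintro ⟨h, rfl⟩
    exact Nat.nth_count h

lemma nth_pos_of_lt_count (h0 : ¬ p 0) {k s : ℕ} (h : k < Nat.count p s) : 0 < Nat.nth p k := by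
  refine Nat.pos_of_ne_zero fun hk => h0 (hk ▸ Nat.nth_mem k fun hf => ?_)
  exact h.trans_le (Nat.count_le_card hf s)

lemma nth_zero_pos_iff {p : ℕ → Prop} (h0 : ¬ p 0) : 0 < Nat.nth p 0 ↔ ∃ l, p l := by
  classical
  refine ⟨fun h => ⟨_, ((nth_eq_iff h).1 rfl).1⟩, fun ⟨l, hl⟩ => ?_⟩
  exact nth_pos_of_lt_count h0 (zero_le.trans_lt (Nat.count_strict_mono hl l.lt_succ_self))

lemma nth_congr_of_forall_le {p q : ℕ → Prop} {k t : ℕ} (hp0 : ¬ p 0) (ht : 0 < t)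
    (hk : Nat.nth p k = t) (hpq : ∀ m ≤ t, p m ↔ q m) {i : ℕ} (hik : i ≤ k) :
    Nat.nth q i = Nat.nth p i := by
  classical
  have hpos : 0 < Nat.nth p i := nth_pos_of_le hp0 hik (hk.symm ▸ ht)
  obtain ⟨hpi, hcount⟩ := (nth_eq_iff hpos).1 rfl
  have hle : Nat.nth p i ≤ t := by
    rcases hik.eq_or_lt with rfl | hlt
    · exact hk.le
    · exact hk ▸ (nth_lt_nth_of_nth_pos hlt (hk.symm ▸ ht)).le
  have hpq' : ∀ m < Nat.nth p i, p m ↔ q m := fun m hm => hpq m (hm.le.trans hle)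
  refine (nth_eq_iff hpos).2 ⟨(hpq _ hle).1 hpi, Eq.trans ?_ hcount⟩
  exact (Nat.count_mono_left fun m hm => (hpq' m hm).2).antisymm
    (Nat.count_mono_left fun m hm => (hpq' m hm).1)

lemma isLeast_Ioi_iff_nth_succ_eq {p : ℕ → Prop} (h0 : ¬ p 0) {k t s : ℕ} (ht : 0 < t)
    (hk : Nat.nth p k = t) :
    IsLeast {m | t < m ∧ p m} s ↔ 0 < s ∧ Nat.nth p (k + 1) = s := by
  classical
  obtain ⟨hpt, hct⟩ := (nth_eq_iff ht).1 hk
  have hnth_le : ∀ m, t < m → p m → k + 1 < Nat.count p (m + 1) := fun m htm hpm =>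
    calc k + 1 = Nat.count p t + 1 := by rw [hct]
      _ ≤ Nat.count p m := Nat.count_strict_mono hpt htm
      _ < Nat.count p (m + 1) := Nat.count_strict_mono hpm m.lt_succ_self
  have hmem : 0 < Nat.nth p (k + 1) → Nat.nth p (k + 1) ∈ {m | t < m ∧ p m} := fun h =>
    ⟨hk ▸ nth_lt_nth_of_nth_pos k.lt_succ_self h, ((nth_eq_iff h).1 rfl).1⟩
  constructor
  · rintro ⟨⟨hts, hps⟩, hmin⟩
    have hlt := hnth_le s hts hps
    refine ⟨ht.trans hts, le_antisymm (Nat.le_of_lt_succ (Nat.nth_lt_of_lt_count hlt)) ?_⟩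
    exact hmin (hmem (nth_pos_of_lt_count h0 hlt))
  · rintro ⟨hs, rfl⟩
    exact ⟨hmem hs, fun m ⟨htm, hpm⟩ =>
      Nat.le_of_lt_succ (Nat.nth_lt_of_lt_count (hnth_le m htm hpm))⟩

lemma tendsto_count_atTop (hp : (Set.ofPred p).Infinite) :
    Tendsto (Nat.count p) atTop atTop :=
  tendsto_atTop.2 fun b => (eventually_ge_atTop (Nat.nth p b)).mono fun _ hN =>
    (Nat.count_nth_of_infinite hp b).ge.trans (Nat.count_monotone p hN)

lemma tendsto_const_div_natCast_atTop {c : ℝ≥0∞} (hc : c ≠ ⊤) :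
    Tendsto (fun n : ℕ => c / n) atTop (𝓝 0) := by
  simpa only [ENNReal.div_top] using
    ENNReal.Tendsto.const_div ENNReal.tendsto_nat_nhds_top (Or.inr hc)

lemma natCast_nth_eq_add_sum_sub {p : ℕ → Prop} (hp : (Set.ofPred p).Infinite) (n : ℕ) :
    (Nat.nth p n : ℝ≥0∞) = Nat.nth p 0 +
      ∑ k ∈ Finset.range n, ((Nat.nth p (k + 1) - Nat.nth p k : ℕ) : ℝ≥0∞) := by
  have hmono := (Nat.nth_strictMono hp).monotone
  rw [← Nat.cast_sum, Finset.sum_range_tsub hmono, ← Nat.cast_add,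
    add_tsub_cancel_of_le (hmono n.zero_le)]

lemma tendsto_div_nth {p : ℕ → Prop} (hp : (Set.ofPred p).Infinite) {m : ℝ≥0∞}
    (hm : Tendsto (fun n : ℕ => (∑ k ∈ Finset.range n,
      ((Nat.nth p (k + 1) - Nat.nth p k : ℕ) : ℝ≥0∞)) / n) atTop (𝓝 m)) :
    Tendsto (fun n : ℕ => (n : ℝ≥0∞) / Nat.nth p n) atTop (𝓝 m⁻¹) := by
  have hfirst : Tendsto (fun n : ℕ => (Nat.nth p 0 : ℝ≥0∞) / n) atTop (𝓝 0) :=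
    tendsto_const_div_natCast_atTop (ENNReal.natCast_ne_top _)
  have hnth := (hfirst.add hm).inv
  rw [zero_add] at hnth
  refine hnth.congr' ?_
  filter_upwards [eventually_ne_atTop 0] with n hn
  rw [← ENNReal.add_div, ← natCast_nth_eq_add_sum_sub hp, ENNReal.inv_div]
  · exact Or.inl (ENNReal.natCast_ne_top n)
  · exact Or.inl (Nat.cast_ne_zero.2 hn)

lemma tendsto_count_succ_div (hp : (Set.ofPred p).Infinite) {a : ℝ≥0∞}
    (ha : Tendsto (fun n : ℕ => (n : ℝ≥0∞) / Nat.nth p n) atTop (𝓝 a)) :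
    Tendsto (fun N : ℕ => (Nat.count p (N + 1) : ℝ≥0∞) / N) atTop (𝓝 a) := by
  have hcount : Tendsto (fun N => Nat.count p (N + 1)) atTop atTop :=
    (tendsto_count_atTop hp).comp (tendsto_add_atTop_nat 1)
  have hupper := (ha.comp ((tendsto_sub_atTop_nat 1).comp hcount)).add
    (tendsto_const_div_natCast_atTop ENNReal.one_ne_top)
  rw [add_zero] at hupper
  refine tendsto_of_tendsto_of_tendsto_of_le_of_le' (ha.comp hcount) hupper ?_ ?_
  · refine .of_forall fun N => ENNReal.div_le_div_left (Nat.cast_le.2 ?_) _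
    exact N.le_succ.trans (Nat.le_nth_count hp (N + 1))
  · filter_upwards [hcount.eventually_ge_atTop 1] with N hN
    have hnth : Nat.nth p (Nat.count p (N + 1) - 1) ≤ N :=
      Nat.le_of_lt_succ (Nat.nth_lt_of_lt_count (Nat.sub_lt hN zero_lt_one))
    calc (Nat.count p (N + 1) : ℝ≥0∞) / N
        = ((Nat.count p (N + 1) - 1 : ℕ) : ℝ≥0∞) / N + 1 / N := by
          rw [← ENNReal.add_div, ← Nat.cast_add_one, Nat.sub_add_cancel hN]
      _ ≤ _ := by
          gcongr
          exact ENNReal.div_le_div_left (Nat.cast_le.2 hnth) _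

lemma tendsto_count_succ_div_of_nth_eq_zero (h0 : ¬ p 0) {k : ℕ} (hk : Nat.nth p k = 0) :
    Tendsto (fun N : ℕ => (Nat.count p (N + 1) : ℝ≥0∞) / N) atTop (𝓝 0) := by
  refine tendsto_of_tendsto_of_tendsto_of_le_of_le tendsto_const_nhds
    (tendsto_const_div_natCast_atTop (ENNReal.natCast_ne_top k))
    (fun _ => zero_le) fun N => ENNReal.div_le_div_right (Nat.cast_le.2 ?_) _
  by_contra! hlt
  exact (nth_pos_of_lt_count h0 hlt).ne' hk

end NthCount

section Probability

variable {Ω : Type*} [MeasurableSpace Ω]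

lemma measure_eq_tsum_preimage_inter {β : Type*} [Countable β] [MeasurableSpace β]
    [MeasurableSingletonClass β] (Q : Measure Ω) {f : Ω → β} (hf : Measurable f) (B : Set Ω) :
    Q B = ∑' b, Q (f ⁻¹' {b} ∩ B) := by
  have hm : ∀ b, MeasurableSet (f ⁻¹' {b}) := fun b => hf (measurableSet_singleton b)
  calc Q B = Q.restrict B (⋃ b, f ⁻¹' {b}) := by
        rw [← Set.preimage_iUnion, Set.iUnion_of_singleton, Set.preimage_univ,
          Measure.restrict_apply_univ]
    _ = ∑' b, Q (f ⁻¹' {b} ∩ B) := by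
        rw [measure_iUnion (fun a b hab => Disjoint.preimage f (by simpa using hab)) hm]
        exact tsum_congr fun b => Measure.restrict_apply (hm b)

lemma measurable_nat_of_preimage_succ {f : Ω → ℕ} (hf : ∀ n, MeasurableSet (f ⁻¹' {n + 1})) :
    Measurable f := by
  have hzero : f ⁻¹' {0} = (⋃ n, f ⁻¹' {n + 1})ᶜ := by
    ext ω
    cases h : f ω <;> simp [h]
  refine measurable_to_countable' fun n => ?_
  cases n with
  | zero => exact hzero ▸ (MeasurableSet.iUnion hf).compl
  | succ n => exact hf n

lemma indepFun_of_measure_singleton {β γ : Type*} [Countable β] [MeasurableSpace β]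
    [MeasurableSingletonClass β] [Countable γ] [MeasurableSpace γ] [MeasurableSingletonClass γ]
    {Q : Measure Ω} [IsFiniteMeasure Q] {f : Ω → β} {g : Ω → γ} (hf : Measurable f)
    (hg : Measurable g)
    (h : ∀ b c, Q (f ⁻¹' {b} ∩ g ⁻¹' {c}) = Q (f ⁻¹' {b}) * Q (g ⁻¹' {c})) :
    IndepFun f g Q := by
  rw [indepFun_iff_map_prod_eq_prod_map_map hf.aemeasurable hg.aemeasurable]
  refine Measure.ext_of_singleton fun ⟨b, c⟩ => ?_
  rw [← Set.singleton_prod_singleton, Measure.prod_prod,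
    Measure.map_apply (hf.prodMk hg) ((measurableSet_singleton b).prod (measurableSet_singleton c)),
    Measure.map_apply hf (measurableSet_singleton b),
    Measure.map_apply hg (measurableSet_singleton c), Set.mk_preimage_prod, h]

variable {Q : Measure Ω} {Y : ℕ → Ω → ℝ≥0}

lemma strong_law_ae_nnreal_of_ne_top (hindep : Pairwise fun i k => IndepFun (Y i) (Y k) Q)
    (hident : ∀ i, IdentDistrib (Y i) (Y 0) Q Q) (htop : ∫⁻ ω, Y 0 ω ∂Q ≠ ⊤) :
    ∀ᵐ ω ∂Q, Tendsto (fun n : ℕ => (∑ k ∈ Finset.range n, (Y k ω : ℝ≥0∞)) / n) atTop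
      (𝓝 (∫⁻ ω, Y 0 ω ∂Q)) := by
  have hcoe : Measurable fun y : ℝ≥0 => (y : ℝ) := measurable_coe_nnreal_real
  have hint : Integrable (fun ω => (Y 0 ω : ℝ)) Q := by
    refine ⟨(hident 0).aemeasurable_fst.coe_nnreal_real.aestronglyMeasurable, ?_⟩
    simpa [HasFiniteIntegral, Real.enorm_eq_ofReal] using htop.lt_top
  have hmean : ENNReal.ofReal (∫ ω, (Y 0 ω : ℝ) ∂Q) = ∫⁻ ω, Y 0 ω ∂Q := by
    rw [ofReal_integral_eq_lintegral_ofReal hint (ae_of_all _ fun ω => (Y 0 ω).2)]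
    simp only [ENNReal.ofReal_coe_nnreal]
  have hlaw := strong_law_ae_real (fun k ω => (Y k ω : ℝ)) hint
    (fun i k hik => (hindep hik).comp hcoe hcoe) fun i => (hident i).comp hcoe
  filter_upwards [hlaw] with ω hω
  rw [← hmean]
  refine (ENNReal.tendsto_ofReal hω).congr' ?_
  filter_upwards [eventually_gt_atTop 0] with n hn
  rw [ENNReal.ofReal_div_of_pos (Nat.cast_pos.2 hn), ENNReal.ofReal_natCast, ← NNReal.coe_sum,
    ENNReal.ofReal_coe_nnreal, ENNReal.ofNNReal_finsetSum]

lemma iSup_lintegral_min_natCast {f : Ω → ℝ≥0} (hf : AEMeasurable f Q) :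
    ⨆ M : ℕ, ∫⁻ ω, (min (f ω) M : ℝ≥0) ∂Q = ∫⁻ ω, f ω ∂Q := by
  rw [← lintegral_iSup' fun M => (hf.min aemeasurable_const).coe_nnreal_ennreal]
  · refine lintegral_congr fun ω => le_antisymm (iSup_le fun M => ?_) ?_
    · exact ENNReal.coe_le_coe.2 (min_le_left _ _)
    · obtain ⟨M, hM⟩ := exists_nat_ge (f ω)
      exact le_iSup_of_le M (by rw [min_eq_left hM])
  · refine ae_of_all _ fun ω M N hMN => ENNReal.coe_le_coe.2 ?_
    exact min_le_min_left _ (Nat.cast_le.2 hMN)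

-- When the mean is infinite, the law of large numbers for the truncations `min (Y k) M` bounds
-- the averages from below by the truncated means, whose supremum over `M` is infinite.
lemma strong_law_ae_nnreal [IsFiniteMeasure Q]
    (hindep : Pairwise fun i k => IndepFun (Y i) (Y k) Q)
    (hident : ∀ i, IdentDistrib (Y i) (Y 0) Q Q) :
    ∀ᵐ ω ∂Q, Tendsto (fun n : ℕ => (∑ k ∈ Finset.range n, (Y k ω : ℝ≥0∞)) / n) atTop
      (𝓝 (∫⁻ ω, Y 0 ω ∂Q)) := by
  by_cases htop : ∫⁻ ω, Y 0 ω ∂Q = ⊤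
  swap
  · exact strong_law_ae_nnreal_of_ne_top hindep hident htop
  have hmin : ∀ M : ℕ, Measurable fun y : ℝ≥0 => min y (M : ℝ≥0) := fun M =>
    measurable_id.min measurable_const
  have htrunc : ∀ M : ℕ, ∀ᵐ ω ∂Q, Tendsto
      (fun n : ℕ => (∑ k ∈ Finset.range n, ((min (Y k ω) M : ℝ≥0) : ℝ≥0∞)) / n) atTop
      (𝓝 (∫⁻ ω, (min (Y 0 ω) M : ℝ≥0) ∂Q)) := fun M =>
    strong_law_ae_nnreal_of_ne_top (fun i k hik => (hindep hik).comp (hmin M) (hmin M))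
      (fun i => (hident i).comp (hmin M))
      (IsFiniteMeasure.lintegral_lt_top_of_bounded_to_ennreal Q
        ⟨M, fun _ => ENNReal.coe_le_coe.2 (min_le_right _ _)⟩).ne
  filter_upwards [ae_all_iff.2 htrunc] with ω hω
  rw [htop, ENNReal.tendsto_nhds_top_iff_nnreal]
  intro c
  obtain ⟨M, hM⟩ : ∃ M : ℕ, (c : ℝ≥0∞) < ∫⁻ ω, (min (Y 0 ω) M : ℝ≥0) ∂Q := by
    rw [← lt_iSup_iff, iSup_lintegral_min_natCast (hident 0).aemeasurable_fst, htop]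
    exact ENNReal.coe_lt_top
  filter_upwards [(hω M).eventually_const_lt hM] with n hn
  refine hn.trans_le (ENNReal.div_le_div_right (Finset.sum_le_sum fun k _ => ?_) _)
  exact ENNReal.coe_le_coe.2 (min_le_left _ _)

end Probability

section PastEvents

variable {E Ω : Type*} {X : ℕ → Ω → E} {t : ℕ} {A B : Set Ω}

/-- The history `X 0, …, X t`. -/
def pathUpTo (X : ℕ → Ω → E) (t : ℕ) (ω : Ω) : Set.Iic t → E := fun m => X m ω

/-- Membership in the event `B` is determined by `X 0, …, X t`. -/
def DependsOnPast (X : ℕ → Ω → E) (t : ℕ) (B : Set Ω) : Prop :=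
  ∀ ⦃ω ω' : Ω⦄, (∀ m ≤ t, X m ω = X m ω') → ω ∈ B → ω' ∈ B

lemma pathUpTo_eq_iff {ω ω' : Ω} :
    pathUpTo X t ω = pathUpTo X t ω' ↔ ∀ m ≤ t, X m ω = X m ω' := by
  simp only [pathUpTo, funext_iff, Subtype.forall, Set.mem_Iic]

lemma pathUpTo_preimage_singleton (ω₀ : Ω) :
    pathUpTo X t ⁻¹' {pathUpTo X t ω₀} = {ω | ∀ m ≤ t, X m ω = X m ω₀} :=
  Set.ext fun _ => pathUpTo_eq_iff

lemma measurable_pathUpTo [MeasurableSpace Ω] [MeasurableSpace E] (hX : ∀ n, Measurable (X n))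
    (t : ℕ) : Measurable (pathUpTo X t) :=
  measurable_pi_lambda _ fun m => hX m

namespace DependsOnPast

lemma inter (hA : DependsOnPast X t A) (hB : DependsOnPast X t B) : DependsOnPast X t (A ∩ B) :=
  fun _ _ h hω => ⟨hA h hω.1, hB h hω.2⟩

lemma mono {s : ℕ} (hst : s ≤ t) (hB : DependsOnPast X s B) : DependsOnPast X t B :=
  fun _ _ h hω => hB (fun m hm => h m (hm.trans hst)) hω

lemma pathUpTo_preimage_inter (hB : DependsOnPast X t B) {ω₀ : Ω} (h₀ : ω₀ ∈ B) :
    pathUpTo X t ⁻¹' {pathUpTo X t ω₀} ∩ B = {ω | ∀ m ≤ t, X m ω = X m ω₀} := by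
  rw [pathUpTo_preimage_singleton]
  exact Set.inter_eq_left.2 fun ω hω => hB (fun m hm => (hω m hm).symm) h₀

lemma measurableSet [Countable E] [MeasurableSpace Ω] [MeasurableSpace E]
    [MeasurableSingletonClass E] (hX : ∀ n, Measurable (X n)) (hB : DependsOnPast X t B) :
    MeasurableSet B := by
  have hpre : pathUpTo X t ⁻¹' (pathUpTo X t '' B) = B :=
    Set.Subset.antisymm (fun _ ⟨_, hω, h⟩ => hB (pathUpTo_eq_iff.1 h) hω)
      (Set.subset_preimage_image _ _)
  exact hpre ▸ measurable_pathUpTo hX t (Set.to_countable _).measurableSet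

end DependsOnPast

lemma dependsOnPast_preimage (X : ℕ → Ω → E) (t : ℕ) (A : Set E) :
    DependsOnPast X t (X t ⁻¹' A) :=
  fun _ _ h hω => Set.mem_preimage.2 (h t le_rfl ▸ hω)

end PastEvents

section FirstReturn

variable {E Ω : Type*}

/-- The first visit to `j` strictly after time `t` happens at time `t + u`. -/
def firstReturn (X : ℕ → Ω → E) (j : E) (t u : ℕ) : Set Ω :=
  {ω | IsLeast {m | t < m ∧ X m ω = j} (t + u)}

lemma firstReturn_zero (X : ℕ → Ω → E) (j : E) (t : ℕ) : firstReturn X j t 0 = ∅ :=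
  Set.eq_empty_of_forall_notMem fun _ h => lt_irrefl _ h.1.1

lemma firstReturn_one (X : ℕ → Ω → E) (j : E) (t : ℕ) :
    firstReturn X j t 1 = X (t + 1) ⁻¹' {j} :=
  Set.ext fun _ => ⟨fun h => h.1.2, fun h => ⟨⟨t.lt_succ_self, h⟩, fun _ hm => hm.1⟩⟩

lemma firstReturn_add_two (X : ℕ → Ω → E) (j : E) (t u : ℕ) :
    firstReturn X j t (u + 2) = X (t + 1) ⁻¹' {j}ᶜ ∩ firstReturn X j (t + 1) (u + 1) := by
  ext ω
  have htime : t + (u + 2) = t + 1 + (u + 1) := by omega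
  simp only [firstReturn, Set.mem_inter_iff, Set.mem_preimage, Set.mem_compl_iff,
    Set.mem_singleton_iff, Set.mem_ofPred_eq, htime]
  constructor
  · rintro ⟨⟨-, hj⟩, hmin⟩
    refine ⟨fun h => ?_, ⟨by omega, hj⟩, fun m hm => hmin ⟨t.lt_succ_self.trans hm.1, hm.2⟩⟩
    have := hmin ⟨t.lt_succ_self, h⟩
    omega
  · rintro ⟨hne, ⟨-, hj⟩, hmin⟩
    refine ⟨⟨by omega, hj⟩, fun m ⟨htm, hm⟩ => hmin ⟨lt_of_le_of_ne htm ?_, hm⟩⟩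
    rintro rfl
    exact hne hm

variable [Countable E] [MeasurableSpace E] [MeasurableSingletonClass E] [MeasurableSpace Ω]
  {Q : Measure Ω} {X : ℕ → Ω → E} {P : E → E → ℝ}

lemma IsMarkovChain.measure_next_inter (hc : IsMarkovChain Q X P) {t : ℕ} {B : Set Ω} {i : E}
    (hB : DependsOnPast X t B) (hi : ∀ ω ∈ B, X t ω = i) (l : E) :
    Q (X (t + 1) ⁻¹' {l} ∩ B) = ENNReal.ofReal (P i l) * Q B := by
  have hpath := measurable_pathUpTo hc.meas t
  rw [measure_eq_tsum_preimage_inter Q hpath, measure_eq_tsum_preimage_inter Q hpath B,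
    ← ENNReal.tsum_mul_left]
  refine tsum_congr fun x => ?_
  rw [Set.inter_left_comm]
  rcases (pathUpTo X t ⁻¹' {x} ∩ B).eq_empty_or_nonempty with hempty | ⟨ω₀, rfl, h₀⟩
  · simp only [hempty, Set.inter_empty, measure_empty, mul_zero]
  · rw [hB.pathUpTo_preimage_inter h₀, ← hi ω₀ h₀]
    exact hc.markov t l fun m => X m ω₀

lemma IsMarkovChain.measure_firstReturn_inter [DecidableEq E] (hc : IsMarkovChain Q X P) (j : E) :
    ∀ (u : ℕ) {t : ℕ} {B : Set Ω} {i : E}, DependsOnPast X t B → (∀ ω ∈ B, X t ω = i) →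
      Q (firstReturn X j t u ∩ B) = ENNReal.ofReal (fpass P j u i) * Q B
  | 0, t, B, i, _, _ => by simp [firstReturn_zero, fpass]
  | 1, t, B, i, hB, hi => by rw [firstReturn_one, hc.measure_next_inter hB hi, fpass]
  | u + 2, t, B, i, hB, hi => by
    rw [measure_eq_tsum_preimage_inter Q (hc.meas (t + 1)),
      ofReal_fpass_add_two hc.nonneg hc.rowSum, ← ENNReal.tsum_mul_right]
    refine tsum_congr fun l => ?_
    rw [firstReturn_add_two, Set.inter_assoc, ← Set.inter_assoc, ← Set.preimage_inter]
    split_ifs with hl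
    · simp [hl]
    · have hB' : DependsOnPast X (t + 1) (X (t + 1) ⁻¹' {l} ∩ B) :=
        (dependsOnPast_preimage X (t + 1) {l}).inter (hB.mono t.le_succ)
      rw [Set.inter_eq_left.2 (Set.singleton_subset_iff.2 hl), Set.inter_left_comm,
        hc.measure_firstReturn_inter j (u + 1) hB' fun ω hω => hω.1, hc.measure_next_inter hB hi]
      ring

end FirstReturn

section Visits

variable {E Ω : Type*} {X : ℕ → Ω → E} {j : E} {ω : Ω} {i k s t u : ℕ}

/-- The path `ω` visits `j` at the positive time `l`. -/
def IsVisit (X : ℕ → Ω → E) (j : E) (ω : Ω) (l : ℕ) : Prop := 1 ≤ l ∧ X l ω = j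

instance [DecidableEq E] (X : ℕ → Ω → E) (j : E) (ω : Ω) : DecidablePred (IsVisit X j ω) :=
  fun l => inferInstanceAs (Decidable (1 ≤ l ∧ X l ω = j))

/-- The time of the visit number `k` to `j`, counted from `k = 0`; it is `0` when there are at
most `k` visits. -/
noncomputable def visitTime (X : ℕ → Ω → E) (j : E) (k : ℕ) (ω : Ω) : ℕ :=
  Nat.nth (IsVisit X j ω) k

/-- The event that the visit number `k` to `j` takes place. -/
def hasVisit (X : ℕ → Ω → E) (j : E) (k : ℕ) : Set Ω := {ω | 0 < visitTime X j k ω}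

/-- The time elapsed between the visits number `k` and `k + 1` to `j`. -/
noncomputable def gap (X : ℕ → Ω → E) (j : E) (k : ℕ) (ω : Ω) : ℕ :=
  visitTime X j (k + 1) ω - visitTime X j k ω

lemma not_isVisit_zero (X : ℕ → Ω → E) (j : E) (ω : Ω) : ¬ IsVisit X j ω 0 :=
  fun h => Nat.not_succ_le_zero 0 h.1

lemma hasVisit_zero (X : ℕ → Ω → E) (j : E) : hasVisit X j 0 = {ω | ∃ l ≥ 1, X l ω = j} :=
  Set.ext fun ω => nth_zero_pos_iff (not_isVisit_zero X j ω)

lemma hasVisit_antitone (X : ℕ → Ω → E) (j : E) : Antitone (hasVisit X j) :=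
  fun _ _ hkl ω => nth_pos_of_le (not_isVisit_zero X j ω) hkl

lemma visitTime_preimage_subset_hasVisit (ht : 0 < t) :
    visitTime X j k ⁻¹' {t} ⊆ hasVisit X j k :=
  fun _ h => ht.trans_eq (Eq.symm h)

lemma apply_eq_of_visitTime_eq (ht : 0 < t) (h : visitTime X j k ω = t) : X t ω = j := by
  classical exact ((nth_eq_iff ht).1 h).1.2

lemma visitTime_congr {ω' : Ω} (ht : 0 < t) (h : visitTime X j k ω = t)
    (hX : ∀ m ≤ t, X m ω = X m ω') (hik : i ≤ k) : visitTime X j i ω' = visitTime X j i ω :=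
  nth_congr_of_forall_le (not_isVisit_zero X j ω) ht h
    (fun m hm => by rw [IsVisit, IsVisit, hX m hm]) hik

lemma dependsOnPast_visitTime (X : ℕ → Ω → E) (j : E) (k : ℕ) (ht : 0 < t) :
    DependsOnPast X t (visitTime X j k ⁻¹' {t}) :=
  fun _ _ hX h => (visitTime_congr ht h hX le_rfl).trans h

lemma dependsOnPast_visitTime_inter_gap (X : ℕ → Ω → E) (j : E) (s : ℕ) (ht : 0 < t)
    (hik : i < k) : DependsOnPast X t (visitTime X j k ⁻¹' {t} ∩ gap X j i ⁻¹' {s}) := by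
  rintro ω ω' hX ⟨h, hgap⟩
  refine ⟨dependsOnPast_visitTime X j k ht hX h, ?_⟩
  rwa [Set.mem_preimage, gap, visitTime_congr ht h hX hik, visitTime_congr ht h hX hik.le]

lemma gap_eq_iff_mem_firstReturn (ht : 0 < t) (hu : 0 < u) (h : visitTime X j k ω = t) :
    gap X j k ω = u ↔ ω ∈ firstReturn X j t u := by
  have hvisit : {m | t < m ∧ X m ω = j} = {m | t < m ∧ IsVisit X j ω m} :=
    Set.ext fun m => and_congr_right fun htm => (and_iff_right (ht.trans htm)).symm
  rw [firstReturn, Set.mem_ofPred_eq, hvisit,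
    isLeast_Ioi_iff_nth_succ_eq (not_isVisit_zero X j ω) ht h, gap, h]
  change _ ↔ 0 < t + u ∧ visitTime X j (k + 1) ω = t + u
  omega

lemma gap_preimage_inter_visitTime (X : ℕ → Ω → E) (j : E) (k : ℕ) (ht : 0 < t) (hu : 0 < u) :
    gap X j k ⁻¹' {u} ∩ visitTime X j k ⁻¹' {t} =
      firstReturn X j t u ∩ visitTime X j k ⁻¹' {t} :=
  Set.ext fun _ => and_congr_left fun h => gap_eq_iff_mem_firstReturn ht hu h

lemma gap_pos_iff : 0 < gap X j k ω ↔ ω ∈ hasVisit X j (k + 1) := by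
  rw [gap, tsub_pos_iff_lt]
  exact ⟨fun h => zero_le.trans_lt h, fun h => nth_lt_nth_of_nth_pos k.lt_succ_self h⟩

lemma gap_preimage_inter_hasVisit (X : ℕ → Ω → E) (j : E) (k : ℕ) (hu : 0 < u) :
    gap X j k ⁻¹' {u} ∩ hasVisit X j (k + 1) = gap X j k ⁻¹' {u} ∩ hasVisit X j k := by
  refine Set.ext fun ω => and_congr_right fun h => ?_
  have hnext : ω ∈ hasVisit X j (k + 1) := gap_pos_iff.1 (hu.trans_eq (Eq.symm h))
  exact iff_of_true hnext (hasVisit_antitone X j k.le_succ hnext)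

lemma visits_eq_count [DecidableEq E] (X : ℕ → Ω → E) (j : E) (n : ℕ) (ω : Ω) :
    visits X j n ω = Nat.count (IsVisit X j ω) (n + 1) := by
  rw [visits, Finset.sum_boole, Nat.count_eq_card_filter_range]
  refine congrArg Nat.cast (congrArg Finset.card (Finset.ext fun m => ?_))
  rw [Finset.mem_filter, Finset.mem_filter, Finset.mem_Icc, Finset.mem_range, IsVisit]
  exact ⟨fun ⟨⟨h1, hn⟩, h⟩ => ⟨Nat.lt_succ_of_le hn, h1, h⟩,
    fun ⟨hn, h1, h⟩ => ⟨⟨h1, Nat.le_of_lt_succ hn⟩, h⟩⟩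

variable [Countable E] [MeasurableSpace E] [MeasurableSingletonClass E] [MeasurableSpace Ω]

lemma measurable_visitTime (hX : ∀ n, Measurable (X n)) (j : E) (k : ℕ) :
    Measurable (visitTime X j k) :=
  measurable_nat_of_preimage_succ fun t =>
    (dependsOnPast_visitTime X j k t.succ_pos).measurableSet hX

lemma measurable_gap (hX : ∀ n, Measurable (X n)) (j : E) (k : ℕ) : Measurable (gap X j k) :=
  (measurable_visitTime hX j (k + 1)).sub (measurable_visitTime hX j k)

lemma measurableSet_hasVisit (hX : ∀ n, Measurable (X n)) (j : E) (k : ℕ) :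
    MeasurableSet (hasVisit X j k) :=
  measurable_visitTime hX j k measurableSet_Ioi

end Visits

section ReturnLaw

variable {E Ω : Type*} [Countable E] [DecidableEq E] [MeasurableSpace E]
  [MeasurableSingletonClass E] [MeasurableSpace Ω] {Q : Measure Ω} {X : ℕ → Ω → E}
  {P : E → E → ℝ} {j : E} {k : ℕ} {B : Set Ω}

namespace IsMarkovChain

-- The strong Markov property at the time of the visit number `k`.
lemma measure_gap_inter (hc : IsMarkovChain Q X P)
    (hB : ∀ t, 0 < t → DependsOnPast X t (visitTime X j k ⁻¹' {t} ∩ B))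
    (hvisit : B ⊆ hasVisit X j k) {u : ℕ} (hu : 0 < u) :
    Q (gap X j k ⁻¹' {u} ∩ B) = ENNReal.ofReal (fpass P j u j) * Q B := by
  have htime := measurable_visitTime hc.meas j k
  rw [measure_eq_tsum_preimage_inter Q htime, measure_eq_tsum_preimage_inter Q htime B,
    ← ENNReal.tsum_mul_left]
  refine tsum_congr fun t => ?_
  rcases t.eq_zero_or_pos with rfl | ht
  · have hempty : visitTime X j k ⁻¹' {0} ∩ B = ∅ :=
      Set.eq_empty_of_forall_notMem fun ω hω => (hvisit hω.2).ne' hω.1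
    rw [Set.inter_left_comm, hempty, Set.inter_empty, measure_empty, mul_zero]
  · rw [← Set.inter_assoc, Set.inter_comm (visitTime X j k ⁻¹' {t}),
      gap_preimage_inter_visitTime X j k ht hu, Set.inter_assoc]
    exact hc.measure_firstReturn_inter j u (hB t ht) fun ω hω => apply_eq_of_visitTime_eq ht hω.1

lemma measure_hasVisit_succ (hc : IsMarkovChain Q X P) (j : E) (k : ℕ) :
    Q (hasVisit X j (k + 1)) =
      (∑' u, ENNReal.ofReal (fpass P j u j)) * Q (hasVisit X j k) := by
  rw [measure_eq_tsum_preimage_inter Q (measurable_gap hc.meas j k), ← ENNReal.tsum_mul_right]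
  refine tsum_congr fun u => ?_
  rcases u.eq_zero_or_pos with rfl | hu
  · have hempty : gap X j k ⁻¹' {0} ∩ hasVisit X j (k + 1) = ∅ :=
      Set.eq_empty_of_forall_notMem fun ω hω => (gap_pos_iff.2 hω.2).ne' hω.1
    rw [hempty, measure_empty, fpass, ENNReal.ofReal_zero, zero_mul]
  · rw [gap_preimage_inter_hasVisit X j k hu]
    refine hc.measure_gap_inter (fun t ht => ?_) subset_rfl hu
    rw [Set.inter_eq_left.2 (visitTime_preimage_subset_hasVisit ht)]
    exact dependsOnPast_visitTime X j k ht

lemma ae_exists_notMem_hasVisit (hc : IsMarkovChain Q X P) (hj : hitProb P j j ≠ 1) :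
    ∀ᵐ ω ∂Q, ∃ k, ω ∉ hasVisit X j k := by
  have := hc.isProb
  suffices hnull : Q (⋂ k, hasVisit X j k) = 0 by
    filter_upwards [measure_eq_zero_iff_ae_notMem.1 hnull] with ω hω
    rwa [Set.mem_iInter, not_forall] at hω
  by_contra hne
  have hlim := tendsto_measure_iInter_atTop
    (fun k => (measurableSet_hasVisit hc.meas j k).nullMeasurableSet)
    (hasVisit_antitone X j) ⟨0, measure_ne_top Q _⟩
  have hmul := ENNReal.Tendsto.const_mul (a := ∑' u, ENNReal.ofReal (fpass P j u j)) hlim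
    (Or.inl hne)
  have hshift := (tendsto_add_atTop_iff_nat 1).2 hlim
  simp only [Function.comp_apply, hc.measure_hasVisit_succ] at hshift hmul
  have heq := tendsto_nhds_unique hmul hshift
  refine hj ((hitProb_eq_one_iff hc.nonneg hc.rowSum j j).2 ?_)
  exact (ENNReal.mul_eq_right hne (measure_ne_top Q _)).1 heq

end IsMarkovChain

end ReturnLaw

section Recurrent

variable {E Ω : Type*} [Countable E] [DecidableEq E] [MeasurableSpace E]
  [MeasurableSingletonClass E] [MeasurableSpace Ω] {Q : Measure Ω} {X : ℕ → Ω → E}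
  {P : E → E → ℝ} {j : E} {k : ℕ} {B : Set Ω}

namespace IsMarkovChain

lemma hasVisit_ae_eq (hc : IsMarkovChain Q X P) (hj : hitProb P j j = 1) (k : ℕ) :
    hasVisit X j k =ᵐ[Q] hasVisit X j 0 := by
  have := hc.isProb
  have hmeasure : Q (hasVisit X j k) = Q (hasVisit X j 0) := by
    have hsum := (hitProb_eq_one_iff hc.nonneg hc.rowSum j j).1 hj
    induction k with
    | zero => rfl
    | succ k ih => rw [hc.measure_hasVisit_succ, hsum, one_mul, ih]
  exact ae_eq_of_subset_of_measure_ge (hasVisit_antitone X j k.zero_le) hmeasure.ge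
    (measurableSet_hasVisit hc.meas j k).nullMeasurableSet (measure_ne_top Q _)

lemma ae_forall_mem_hasVisit (hc : IsMarkovChain Q X P) (hj : hitProb P j j = 1) :
    ∀ᵐ ω ∂Q, ω ∈ hasVisit X j 0 → ∀ k, ω ∈ hasVisit X j k := by
  filter_upwards [ae_all_iff.2 fun k => (hc.hasVisit_ae_eq hj k).mem_iff] with ω hω h0 k
  exact (hω k).2 h0

lemma cond_hasVisit_apply (hc : IsMarkovChain Q X P) (hj : hitProb P j j = 1) (k : ℕ)
    (B : Set Ω) :
    Q[B | hasVisit X j 0] = (Q (hasVisit X j 0))⁻¹ * Q (hasVisit X j k ∩ B) := by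
  rw [cond_apply (measurableSet_hasVisit hc.meas j 0)]
  exact congrArg _ (measure_congr ((hc.hasVisit_ae_eq hj k).symm.inter (ae_eq_refl B)))

lemma cond_gap_inter (hc : IsMarkovChain Q X P) (hj : hitProb P j j = 1)
    (hB : ∀ t, 0 < t → DependsOnPast X t (visitTime X j k ⁻¹' {t} ∩ B)) (u : ℕ) :
    Q[gap X j k ⁻¹' {u} ∩ B | hasVisit X j 0] =
      ENNReal.ofReal (fpass P j u j) * Q[B | hasVisit X j 0] := by
  rcases u.eq_zero_or_pos with rfl | hu
  · have hempty : hasVisit X j (k + 1) ∩ (gap X j k ⁻¹' {0} ∩ B) = ∅ :=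
      Set.eq_empty_of_forall_notMem fun ω hω => (gap_pos_iff.2 hω.1).ne' hω.2.1
    rw [hc.cond_hasVisit_apply hj (k + 1), hempty, measure_empty, mul_zero, fpass,
      ENNReal.ofReal_zero, zero_mul]
  · rw [hc.cond_hasVisit_apply hj k, hc.cond_hasVisit_apply hj k, Set.inter_left_comm,
      hc.measure_gap_inter (fun t ht => ?_) Set.inter_subset_left hu, mul_left_comm]
    rw [← Set.inter_assoc, Set.inter_eq_left.2 (visitTime_preimage_subset_hasVisit ht)]
    exact hB t ht

lemma cond_gap (hc : IsMarkovChain Q X P) (hj : hitProb P j j = 1)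
    (h0 : Q (hasVisit X j 0) ≠ 0) (k u : ℕ) :
    Q[gap X j k ⁻¹' {u} | hasVisit X j 0] = ENNReal.ofReal (fpass P j u j) := by
  have := hc.isProb
  have := cond_isProbabilityMeasure h0
  have h := hc.cond_gap_inter (k := k) (B := Set.univ) hj (fun t ht => by
    rw [Set.inter_univ]; exact dependsOnPast_visitTime X j k ht) u
  rwa [Set.inter_univ, measure_univ, mul_one] at h

lemma pairwise_indepFun_gap (hc : IsMarkovChain Q X P) (hj : hitProb P j j = 1)
    (h0 : Q (hasVisit X j 0) ≠ 0) :
    Pairwise fun i k => IndepFun (gap X j i) (gap X j k) Q[|hasVisit X j 0] := by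
  have := hc.isProb
  have := cond_isProbabilityMeasure h0
  have hlt : ∀ i k, i < k → IndepFun (gap X j i) (gap X j k) Q[|hasVisit X j 0] := by
    refine fun i k hik => indepFun_of_measure_singleton (measurable_gap hc.meas j i)
      (measurable_gap hc.meas j k) fun s u => ?_
    rw [Set.inter_comm, hc.cond_gap_inter hj (fun t ht =>
      dependsOnPast_visitTime_inter_gap X j s ht hik), hc.cond_gap hj h0 k, mul_comm]
  exact fun i k hik => hik.lt_or_gt.elim (hlt i k) fun h => (hlt k i h).symm

lemma identDistrib_gap (hc : IsMarkovChain Q X P) (hj : hitProb P j j = 1)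
    (h0 : Q (hasVisit X j 0) ≠ 0) (i k : ℕ) :
    IdentDistrib (gap X j i) (gap X j k) Q[|hasVisit X j 0] Q[|hasVisit X j 0] := by
  have hm := measurable_gap hc.meas j
  refine ⟨(hm i).aemeasurable, (hm k).aemeasurable, Measure.ext_of_singleton fun u => ?_⟩
  rw [Measure.map_apply (hm i) (measurableSet_singleton u),
    Measure.map_apply (hm k) (measurableSet_singleton u), hc.cond_gap hj h0, hc.cond_gap hj h0]

lemma lintegral_gap (hc : IsMarkovChain Q X P) (hj : hitProb P j j = 1)
    (h0 : Q (hasVisit X j 0) ≠ 0) (k : ℕ) :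
    ∫⁻ ω, (gap X j k ω : ℝ≥0∞) ∂Q[|hasVisit X j 0] = meanReturn P j := by
  have hm := measurable_gap hc.meas j k
  rw [← lintegral_map (f := fun u : ℕ => (u : ℝ≥0∞)) measurable_from_top hm, lintegral_countable',
    meanReturn]
  refine tsum_congr fun u => ?_
  rw [Measure.map_apply hm (measurableSet_singleton u), hc.cond_gap hj h0]

lemma ae_tendsto_average_gap (hc : IsMarkovChain Q X P) (hj : hitProb P j j = 1) :
    ∀ᵐ ω ∂Q, ω ∈ hasVisit X j 0 → Tendsto
      (fun n : ℕ => (∑ k ∈ Finset.range n, (gap X j k ω : ℝ≥0∞)) / n) atTop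
      (𝓝 (meanReturn P j)) := by
  have := hc.isProb
  by_cases h0 : Q (hasVisit X j 0) = 0
  · filter_upwards [measure_eq_zero_iff_ae_notMem.1 h0] with ω hω hmem
    exact absurd hmem hω
  have hcast : Measurable fun u : ℕ => (u : ℝ≥0) := measurable_from_top
  have hlaw := strong_law_ae_nnreal (Y := fun k ω => (gap X j k ω : ℝ≥0))
    (fun i k hik => (hc.pairwise_indepFun_gap hj h0 hik).comp hcast hcast)
    fun i => (hc.identDistrib_gap hj h0 i 0).comp hcast
  simp only [ENNReal.coe_natCast, hc.lintegral_gap hj h0] at hlaw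
  rwa [ProbabilityTheory.cond, Measure.ae_ennreal_smul_measure_iff
    (ENNReal.inv_ne_zero.2 (measure_ne_top Q _)),
    ae_restrict_iff' (measurableSet_hasVisit hc.meas j 0)] at hlaw

end IsMarkovChain

end Recurrent

section Frequency

variable {E Ω : Type*} [DecidableEq E] {P : E → E → ℝ} {X : ℕ → Ω → E} {j : E} {k : ℕ} {ω : Ω}

/-- The long-run proportion of time spent at `j` by a chain that visits `j`. It is `0` for a null
recurrent `j` because `⊤⁻¹ = 0`. -/
noncomputable def visitFreq (P : E → E → ℝ) (j : E) : ℝ≥0∞ :=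
  if hitProb P j j = 1 then (meanReturn P j)⁻¹ else 0

lemma toReal_visitFreq (P : E → E → ℝ) (j : E) :
    (visitFreq P j).toReal =
      {i | PositiveRecurrent P i}.indicator (fun i => 1 / (meanReturn P i).toReal) j := by
  classical
  simp only [visitFreq, Set.indicator_apply, Set.mem_ofPred_eq, PositiveRecurrent, ite_and]
  split_ifs with hj hm
  · rw [ENNReal.toReal_inv, one_div]
  · rw [not_lt_top_iff.1 hm, ENNReal.inv_top, ENNReal.toReal_zero]
  · exact ENNReal.toReal_zero

lemma visitFreq_ne_top (h0 : ∀ i j, 0 ≤ P i j) (h1 : ∀ i, ∑' j, P i j = 1) (j : E) :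
    visitFreq P j ≠ ⊤ := by
  rw [visitFreq]
  split_ifs with hj
  · have hone : 1 ≤ meanReturn P j :=
      ((hitProb_eq_one_iff h0 h1 j j).1 hj).ge.trans (tsum_fpass_le_meanReturn P j)
    exact ENNReal.inv_ne_top.2 (zero_lt_one.trans_le hone).ne'
  · exact ENNReal.zero_ne_top

lemma visits_div_mem_Icc (X : ℕ → Ω → E) (j : E) (n : ℕ) (ω : Ω) :
    visits X j n ω / n ∈ Set.Icc (0 : ℝ) 1 := by
  rw [visits, Finset.sum_boole]
  refine ⟨by positivity, div_le_one_of_le₀ (Nat.cast_le.2 ?_) n.cast_nonneg⟩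
  exact (Finset.card_filter_le _ _).trans_eq (Nat.card_Icc 1 n)

lemma average_eq_tsum_visits (X : ℕ → Ω → E) (g : E → ℝ) (n : ℕ) (ω : Ω) :
    (1 / (n : ℝ)) * ∑ k ∈ Finset.Icc 1 n, g (X k ω) = ∑' j, g j * (visits X j n ω / n) := by
  have hterm : ∀ k, HasSum (fun j => g j * if X k ω = j then 1 else 0) (g (X k ω)) := fun k => by
    convert hasSum_single (X k ω) fun j hj => ?_ using 1
    · rw [if_pos rfl, mul_one]
    · rw [if_neg hj.symm, mul_zero]
  rw [← (hasSum_sum fun k _ => hterm k).tsum_eq, ← tsum_mul_left]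
  refine tsum_congr fun j => ?_
  rw [visits, ← Finset.mul_sum]
  ring

lemma tsum_mul_indicator_visitFreq (P : E → E → ℝ) (X : ℕ → Ω → E) (g : E → ℝ) (ω : Ω) :
    ∑' j, g j * (hasVisit X j 0).indicator (fun _ => (visitFreq P j).toReal) ω =
      ∑' j : {j : E // PositiveRecurrent P j},
        ({ω' | ∃ l ≥ 1, X l ω' = j.1}).indicator
          (fun _ => g j.1 / (meanReturn P j.1).toReal) ω := by
  have hsub := tsum_subtype {j | PositiveRecurrent P j} fun j =>
    ({ω' | ∃ l ≥ 1, X l ω' = j}).indicator (fun _ => g j / (meanReturn P j).toReal) ω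
  refine Eq.trans (tsum_congr fun j => ?_) hsub.symm
  rw [hasVisit_zero, toReal_visitFreq]
  by_cases hj : PositiveRecurrent P j <;> by_cases hω : ∃ l ≥ 1, X l ω = j <;>
    simp [Set.indicator, hj, hω, div_eq_mul_inv]

lemma tendsto_count_of_forall_mem_hasVisit (hvisit : ∀ k, ω ∈ hasVisit X j k) {m : ℝ≥0∞}
    (hm : Tendsto (fun n : ℕ => (∑ k ∈ Finset.range n, (gap X j k ω : ℝ≥0∞)) / n) atTop (𝓝 m)) :
    Tendsto (fun n : ℕ => (Nat.count (IsVisit X j ω) (n + 1) : ℝ≥0∞) / n) atTop (𝓝 m⁻¹) :=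
  have hinf := infinite_of_forall_nth_pos hvisit
  tendsto_count_succ_div hinf (tendsto_div_nth hinf hm)

lemma tendsto_count_of_notMem_hasVisit (hk : ω ∉ hasVisit X j k) :
    Tendsto (fun n : ℕ => (Nat.count (IsVisit X j ω) (n + 1) : ℝ≥0∞) / n) atTop (𝓝 0) :=
  tendsto_count_succ_div_of_nth_eq_zero (not_isVisit_zero X j ω) (Nat.eq_zero_of_not_pos hk)

variable [Countable E] [MeasurableSpace E] [MeasurableSingletonClass E] [MeasurableSpace Ω]
  {Q : Measure Ω}

namespace IsMarkovChain

lemma ae_tendsto_count (hc : IsMarkovChain Q X P) (j : E) :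
    ∀ᵐ ω ∂Q, Tendsto (fun n : ℕ => (Nat.count (IsVisit X j ω) (n + 1) : ℝ≥0∞) / n) atTop
      (𝓝 ((hasVisit X j 0).indicator (fun _ => visitFreq P j) ω)) := by
  by_cases hj : hitProb P j j = 1
  · filter_upwards [hc.ae_forall_mem_hasVisit hj, hc.ae_tendsto_average_gap hj]
      with ω hvisit hgap
    by_cases h0 : ω ∈ hasVisit X j 0
    · rw [Set.indicator_of_mem h0, visitFreq, if_pos hj]
      exact tendsto_count_of_forall_mem_hasVisit (hvisit h0) (hgap h0)
    · rw [Set.indicator_of_notMem h0]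
      exact tendsto_count_of_notMem_hasVisit h0
  · filter_upwards [hc.ae_exists_notMem_hasVisit hj] with ω ⟨k, hk⟩
    rw [visitFreq, if_neg hj, Set.indicator_zero]
    exact tendsto_count_of_notMem_hasVisit hk

lemma ae_tendsto_visits (hc : IsMarkovChain Q X P) (j : E) :
    ∀ᵐ ω ∂Q, Tendsto (fun n : ℕ => visits X j n ω / n) atTop
      (𝓝 ((hasVisit X j 0).indicator (fun _ => (visitFreq P j).toReal) ω)) := by
  filter_upwards [hc.ae_tendsto_count j] with ω hω
  have hfin : (hasVisit X j 0).indicator (fun _ => visitFreq P j) ω ≠ ⊤ := by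
    classical
    rw [Set.indicator_apply]
    exact ite_ne_top (fun _ => visitFreq_ne_top hc.nonneg hc.rowSum j) fun _ => ENNReal.zero_ne_top
  have hreal := (ENNReal.tendsto_toReal hfin).comp hω
  rw [← Function.comp_apply (f := ENNReal.toReal), ← Set.indicator_comp_of_zero ENNReal.toReal_zero]
    at hreal
  simpa only [Function.comp_def, ENNReal.toReal_div, ENNReal.toReal_natCast, visits_eq_count]
    using hreal

lemma ae_tendsto_average (hc : IsMarkovChain Q X P) {g : E → ℝ}
    (hg : Summable fun i => |g i|) :
    ∀ᵐ ω ∂Q, Tendsto (fun n : ℕ => (1 / (n : ℝ)) * ∑ k ∈ Finset.Icc 1 n, g (X k ω)) atTop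
      (𝓝 (∑' j : {j : E // PositiveRecurrent P j},
        ({ω' | ∃ l ≥ 1, X l ω' = j.1}).indicator
          (fun _ => g j.1 / (meanReturn P j.1).toReal) ω)) := by
  filter_upwards [ae_all_iff.2 hc.ae_tendsto_visits] with ω hω
  simp_rw [average_eq_tsum_visits]
  rw [← tsum_mul_indicator_visitFreq]
  refine tendsto_tsum_of_dominated_convergence hg (fun j => (hω j).const_mul (g j))
    (.of_forall fun n j => ?_)
  obtain ⟨hnonneg, hle⟩ := visits_div_mem_Icc X j n ω
  rw [norm_mul, Real.norm_eq_abs, Real.norm_of_nonneg hnonneg]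
  exact mul_le_of_le_one_right (abs_nonneg _) hle

end IsMarkovChain

end Frequency

section NormalizedMeasure

variable {E Ω : Type*} {σ : MeasurableSpace Ω} {ν : OuterMeasure Ω} {hσ : σ ≤ ν.caratheodory}
  {X : ℕ → Ω → E} {P : E → E → ℝ}

lemma measurable_of_measurableSet_cylinder [Countable E] [MeasurableSpace E]
    (h : ∀ n (f : ℕ → E), MeasurableSet {ω | ∀ m ≤ n, X m ω = f m}) (n : ℕ) :
    Measurable (X n) := by
  have hpath : Measurable (pathUpTo X n) := measurable_to_countable fun ω => by
    rw [pathUpTo_preimage_singleton]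
    exact h n fun m => X m ω
  exact (measurable_pi_apply (⟨n, Set.self_mem_Iic⟩ : Set.Iic n)).comp hpath

/-- The probability measure defined by an outer measure of finite nonzero total mass on a
`σ`-algebra of Carathéodory measurable sets. -/
noncomputable def normalizedMeasure (ν : OuterMeasure Ω) (hσ : σ ≤ ν.caratheodory) : Measure Ω :=
  (ν Set.univ)⁻¹ • ν.toMeasure hσ

lemma normalizedMeasure_apply {B : Set Ω} (hB : MeasurableSet B) :
    normalizedMeasure ν hσ B = (ν Set.univ)⁻¹ * ν B := by
  rw [normalizedMeasure, Measure.smul_apply, toMeasure_apply ν hσ hB, smul_eq_mul]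

lemma eq_zero_of_normalizedMeasure_eq_zero (htop : ν Set.univ ≠ ⊤) {B : Set Ω}
    (hB : normalizedMeasure ν hσ B = 0) : ν B = 0 := by
  rw [normalizedMeasure, Measure.smul_apply, smul_eq_mul, mul_eq_zero] at hB
  exact le_zero_iff.1 <|
    (le_toMeasure_apply ν hσ B).trans_eq (hB.resolve_left (ENNReal.inv_ne_zero.2 htop))

lemma isMarkovChain_normalizedMeasure [Countable E] {_ : MeasurableSpace E}
    [MeasurableSingletonClass E] (h0 : ν Set.univ ≠ 0) (htop : ν Set.univ ≠ ⊤)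
    (hnonneg : ∀ i j, 0 ≤ P i j) (hrow : ∀ i, ∑' j, P i j = 1)
    (hcyl : ∀ n (f : ℕ → E), MeasurableSet {ω | ∀ m ≤ n, X m ω = f m})
    (hmarkov : ∀ n l (f : ℕ → E), ν ({ω | X (n + 1) ω = l} ∩ {ω | ∀ m ≤ n, X m ω = f m}) =
      ENNReal.ofReal (P (f n) l) * ν {ω | ∀ m ≤ n, X m ω = f m}) :
    IsMarkovChain (normalizedMeasure ν hσ) X P := by
  have hX := measurable_of_measurableSet_cylinder hcyl
  refine ⟨⟨?_⟩, hX, hnonneg, hrow, fun n l f => ?_⟩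
  · rw [normalizedMeasure_apply MeasurableSet.univ, ENNReal.inv_mul_cancel h0 htop]
  · have hl : MeasurableSet {ω | X (n + 1) ω = l} := hX (n + 1) (measurableSet_singleton l)
    rw [normalizedMeasure_apply (hl.inter (hcyl n f)), normalizedMeasure_apply (hcyl n f),
      hmarkov, mul_left_comm]

end NormalizedMeasure

section Trace

variable {E Ω : Type*} [MeasurableSpace Ω] {μ : Measure Ω} {X : ℕ → Ω → E} {P : E → E → ℝ}

lemma isCaratheodory_restrict [IsFiniteMeasure μ] {A D : Set Ω}
    (h : μ (D ∩ A) + μ (D \ A) ≤ μ D) :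
    (OuterMeasure.restrict D μ.toOuterMeasure).IsCaratheodory A := by
  rw [OuterMeasure.isCaratheodory_iff_le']
  intro T
  simp only [OuterMeasure.restrict_apply, Measure.coe_toOuterMeasure]
  set M := toMeasurable μ (D ∩ A)
  set N := toMeasurable μ (D \ A)
  have hDM : D ∩ A ⊆ M := subset_toMeasurable μ _
  have hDN : D \ A ⊆ N := subset_toMeasurable μ _
  have hnull : μ (M ∩ N) = 0 := by
    have hsum : μ (M ∪ N) + μ (M ∩ N) ≤ μ (M ∪ N) + 0 :=
      calc μ (M ∪ N) + μ (M ∩ N) = μ (D ∩ A) + μ (D \ A) := by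
            rw [measure_union_add_inter M (measurableSet_toMeasurable μ _), measure_toMeasurable,
              measure_toMeasurable]
        _ ≤ μ D := h
        _ ≤ μ (M ∪ N) + 0 := by
            rw [add_zero, ← Set.inter_union_sdiff D A]
            exact measure_mono (Set.union_subset_union hDM hDN)
    exact le_zero_iff.1 ((ENNReal.add_le_add_iff_left (measure_ne_top μ _)).1 hsum)
  have hin : T ∩ A ∩ D ⊆ T ∩ D ∩ M := fun ω ⟨⟨hT, hA⟩, hD⟩ => ⟨⟨hT, hD⟩, hDM ⟨hD, hA⟩⟩
  have hout : (T \ A) ∩ D ⊆ (T ∩ D) \ M ∪ M ∩ N := fun ω ⟨⟨hT, hA⟩, hD⟩ =>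
    (em (ω ∈ M)).symm.imp (fun hM => ⟨⟨hT, hD⟩, hM⟩) fun hM => ⟨hM, hDN ⟨hD, hA⟩⟩
  calc μ (T ∩ A ∩ D) + μ ((T \ A) ∩ D)
      ≤ μ (T ∩ D ∩ M) + (μ ((T ∩ D) \ M) + μ (M ∩ N)) :=
        add_le_add (measure_mono hin) ((measure_mono hout).trans (measure_union_le _ _))
    _ = μ (T ∩ D) := by
        rw [hnull, add_zero, measure_inter_add_sdiff _ (measurableSet_toMeasurable μ _)]

/-- The trace of `μ` on `{X 0 = a}`. It is an outer measure because this event need not be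
measurable: nothing is assumed about the `σ`-algebra of the state space. -/
noncomputable def initialTrace (μ : Measure Ω) (X : ℕ → Ω → E) (a : E) : OuterMeasure Ω :=
  OuterMeasure.restrict {ω | X 0 ω = a} μ.toOuterMeasure

lemma initialTrace_apply (μ : Measure Ω) (X : ℕ → Ω → E) (a : E) (B : Set Ω) :
    initialTrace μ X a B = μ (B ∩ {ω | X 0 ω = a}) :=
  OuterMeasure.restrict_apply _ _ _

variable [MeasurableSpace E]

namespace IsMarkovChain

lemma initialTrace_next_inter (hc : IsMarkovChain μ X P) (a : E) (n : ℕ) (l : E) (f : ℕ → E) :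
    initialTrace μ X a ({ω | X (n + 1) ω = l} ∩ {ω | ∀ m ≤ n, X m ω = f m}) =
      ENNReal.ofReal (P (f n) l) * initialTrace μ X a {ω | ∀ m ≤ n, X m ω = f m} := by
  rw [initialTrace_apply, initialTrace_apply, Set.inter_assoc]
  by_cases h : f 0 = a
  · have hsub : {ω | ∀ m ≤ n, X m ω = f m} ⊆ {ω | X 0 ω = a} := fun ω hω =>
      (hω 0 n.zero_le).trans h
    rw [Set.inter_eq_left.2 hsub, hc.markov]
  · have hempty : {ω | ∀ m ≤ n, X m ω = f m} ∩ {ω | X 0 ω = a} = ∅ :=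
      Set.eq_empty_of_forall_notMem fun ω hω => h ((hω.1 0 n.zero_le).symm.trans hω.2)
    rw [hempty, Set.inter_empty, measure_empty, mul_zero]

variable [Countable E]

lemma initialTrace_next_add_le (hc : IsMarkovChain μ X P) (a : E) (n : ℕ) (l : E) (f : ℕ → E) :
    initialTrace μ X a ({ω | X (n + 1) ω = l} ∩ {ω | ∀ m ≤ n, X m ω = f m}) +
        initialTrace μ X a ({ω | X (n + 1) ω ≠ l} ∩ {ω | ∀ m ≤ n, X m ω = f m}) ≤
      initialTrace μ X a {ω | ∀ m ≤ n, X m ω = f m} := by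
  classical
  set C : Set Ω := {ω | ∀ m ≤ n, X m ω = f m} with hC
  have hcover : {ω | X (n + 1) ω ≠ l} ∩ C ⊆
      ⋃ i, if i = l then ∅ else {ω | X (n + 1) ω = i} ∩ C := fun ω ⟨hne, hω⟩ =>
    Set.mem_iUnion.2 ⟨X (n + 1) ω, (if_neg hne).symm ▸ ⟨rfl, hω⟩⟩
  calc initialTrace μ X a ({ω | X (n + 1) ω = l} ∩ C) +
        initialTrace μ X a ({ω | X (n + 1) ω ≠ l} ∩ C)
      ≤ initialTrace μ X a ({ω | X (n + 1) ω = l} ∩ C) +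
        ∑' i, if i = l then 0 else initialTrace μ X a ({ω | X (n + 1) ω = i} ∩ C) := by
        refine add_le_add_right ((measure_mono hcover).trans ((measure_iUnion_le _).trans_eq ?_)) _
        exact tsum_congr fun i => by rw [apply_ite (initialTrace μ X a), measure_empty]
    _ = ∑' i, initialTrace μ X a ({ω | X (n + 1) ω = i} ∩ C) := by
        convert (ENNReal.tsum_eq_add_tsum_ite (f := fun i =>
          initialTrace μ X a ({ω | X (n + 1) ω = i} ∩ C)) l).symm
    _ = initialTrace μ X a C := by
        simp_rw [hC, hc.initialTrace_next_inter a n _ f]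
        rw [ENNReal.tsum_mul_right, tsum_ofReal_row hc.nonneg hc.rowSum, one_mul]

lemma initialTrace_cylinder_add_compl_le (hc : IsMarkovChain μ X P) (a : E) (f : ℕ → E) (n : ℕ) :
    initialTrace μ X a {ω | ∀ m ≤ n, X m ω = f m} +
        initialTrace μ X a {ω | ∀ m ≤ n, X m ω = f m}ᶜ ≤ initialTrace μ X a Set.univ := by
  induction n with
  | zero =>
    simp only [Nat.le_zero, forall_eq, initialTrace_apply, Set.univ_inter]
    by_cases h : f 0 = a
    · simp [h]
    · have hempty : {ω | X 0 ω = f 0} ∩ {ω | X 0 ω = a} = ∅ :=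
        Set.eq_empty_of_forall_notMem fun ω hω => h (hω.1.symm.trans hω.2)
      rw [hempty, measure_empty, zero_add]
      exact measure_mono Set.inter_subset_right
  | succ n ih =>
    have hcyl : {ω | ∀ m ≤ n + 1, X m ω = f m} =
        {ω | X (n + 1) ω = f (n + 1)} ∩ {ω | ∀ m ≤ n, X m ω = f m} := by
      ext ω
      simp only [Nat.le_succ_iff, or_imp, forall_and, forall_eq, Set.mem_inter_iff,
        Set.mem_ofPred_eq, and_comm]
    set C : Set Ω := {ω | ∀ m ≤ n, X m ω = f m}
    have hcompl : ({ω | X (n + 1) ω = f (n + 1)} ∩ C)ᶜ ⊆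
        {ω | X (n + 1) ω ≠ f (n + 1)} ∩ C ∪ Cᶜ := fun ω hω =>
      (em (ω ∈ C)).imp (fun hC => ⟨fun h => hω ⟨h, hC⟩, hC⟩) id
    rw [hcyl]
    calc _ ≤ initialTrace μ X a ({ω | X (n + 1) ω = f (n + 1)} ∩ C) +
          (initialTrace μ X a ({ω | X (n + 1) ω ≠ f (n + 1)} ∩ C) + initialTrace μ X a Cᶜ) := by
          exact add_le_add_right ((measure_mono hcompl).trans (measure_union_le _ _)) _
      _ ≤ initialTrace μ X a C + initialTrace μ X a Cᶜ := by
          rw [← add_assoc]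
          exact add_le_add_left (hc.initialTrace_next_add_le a n (f (n + 1)) f) _
      _ ≤ _ := ih

lemma isCaratheodory_cylinder (hc : IsMarkovChain μ X P) (a : E) (n : ℕ) (f : ℕ → E) :
    (initialTrace μ X a).IsCaratheodory {ω | ∀ m ≤ n, X m ω = f m} := by
  have := hc.isProb
  have h := hc.initialTrace_cylinder_add_compl_le a f n
  simp only [initialTrace_apply, Set.univ_inter] at h
  refine isCaratheodory_restrict ?_
  rwa [Set.sdiff_eq, Set.inter_comm, Set.inter_comm {ω | X 0 ω = a}]

lemma ae_of_forall_discrete (hc : IsMarkovChain μ X P) {p : Ω → Prop}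
    (hp : ∀ (_ : MeasurableSpace Ω) (Q : Measure Ω), @IsMarkovChain E Ω _ ⊤ Q X P →
      ∀ᵐ ω ∂Q, p ω) :
    ∀ᵐ ω ∂μ, p ω := by
  suffices h : ∀ a, ∀ᵐ ω ∂μ, X 0 ω = a → p ω from
    (ae_all_iff.2 h).mono fun ω hω => hω (X 0 ω) rfl
  intro a
  have htop : initialTrace μ X a Set.univ ≠ ⊤ := by
    have := hc.isProb
    rw [initialTrace_apply]
    exact measure_ne_top μ _
  have htrace : initialTrace μ X a {ω | ¬ p ω} = 0 := by
    by_cases ha : initialTrace μ X a Set.univ = 0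
    · exact measure_mono_null (Set.subset_univ _) ha
    · refine eq_zero_of_normalizedMeasure_eq_zero (hσ := le_rfl) htop (hp _ _ ?_)
      exact isMarkovChain_normalizedMeasure ha htop hc.nonneg hc.rowSum
        (hc.isCaratheodory_cylinder a) (hc.initialTrace_next_inter a)
  rw [initialTrace_apply] at htrace
  exact measure_mono_null (fun ω hω => (Classical.not_imp.1 hω).symm) htrace

end IsMarkovChain

end Trace

/-- For absolutely summable `g`, almost surely the Cesàro averages of `g(X_k)` converge to
`∑_{j ∈ C} (g(j)/m_j) 1_{A^j}`, where `A^j` is the event that the chain ever visits `j`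
and `C` is the set of positive recurrent states. -/
theorem cesaro_g_tendsto_ae
    {Ω : Type*} [MeasurableSpace Ω] [MeasurableSpace S] (μ : Measure Ω)
    (X : ℕ → Ω → S) (P : S → S → ℝ) (hMC : IsMarkovChain μ X P)
    (g : S → ℝ) (hg : Summable fun i => |g i|) :
    ∀ᵐ ω ∂μ, Tendsto (fun n : ℕ => (1 / (n : ℝ)) * ∑ k ∈ Finset.Icc 1 n, g (X k ω))
      atTop
      (𝓝 (∑' j : {j : S // PositiveRecurrent P j},
        ({ω' | ∃ l ≥ 1, X l ω' = j.1}).indicator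
          (fun _ => g j.1 / (meanReturn P j.1).toReal) ω)) := by
  refine hMC.ae_of_forall_discrete fun _ Q hQ => ?_
  let _ : MeasurableSpace S := ⊤
  exact hQ.ae_tendsto_average hg
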